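/- Let G be a 2-connected bipartite graph containing no even subdivision of K_{2,3}, and let G^e be a Pfaffian orientation of G. Then every cycle of G is oddly oriented in G^e. -/

import Mathlib

/-- `G.HasSubdivision H plen` means `G` contains a subdivision of `H` in which the path
replacing each edge of `H` has length satisfying `plen`: there is an injection `f` of the
vertices of `H` (branch vertices) into `G`, and for each edge of `H` a path in `G` between the
corresponding branch vertices, such that no branch vertex is an internal vertex of any such
path and paths corresponding to distinct edges meet only in branch vertices. -/
def SimpleGraph.HasSubdivision {V W : Type*} (G : SimpleGraph V) (H : SimpleGraph W)
    (plen : ℕ → Prop) : Prop :=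
  ∃ f : W → V, Function.Injective f ∧
    ∃ p : ∀ a b, H.Adj a b → G.Walk (f a) (f b),
      (∀ a b (h : H.Adj a b), (p a b h).IsPath) ∧
      (∀ a b (h : H.Adj a b), plen (p a b h).length) ∧
      (∀ a b (h : H.Adj a b) (w : W), f w ∈ (p a b h).support → w = a ∨ w = b) ∧
      (∀ a b a' b' (h : H.Adj a b) (h' : H.Adj a' b'), s(a, b) ≠ s(a', b') →
        ∀ x, x ∈ (p a b h).support → x ∈ (p a' b' h').support →
          (x = f a ∨ x = f b) ∧ (x = f a' ∨ x = f b'))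

/-- `G` contains a subdivision of `H`. -/
def SimpleGraph.ContainsSubdivision {V W : Type*} (G : SimpleGraph V) (H : SimpleGraph W) :
    Prop :=
  G.HasSubdivision H fun _ => True

/-- `G` contains an even subdivision of `H`, i.e. a subdivision in which every edge of `H`
is subdivided an even number of times (so the replacing paths have odd length). -/
def SimpleGraph.ContainsEvenSubdivision {V W : Type*} (G : SimpleGraph V) (H : SimpleGraph W) :
    Prop :=
  G.HasSubdivision H fun n => Odd n

/-- Planarity, via Kuratowski's characterization: no subdivision of `K₅` or `K₃,₃`. -/
def SimpleGraph.KuratowskiPlanar {V : Type*} (G : SimpleGraph V) : Prop :=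
  ¬ G.ContainsSubdivision (completeGraph (Fin 5)) ∧
    ¬ G.ContainsSubdivision (completeBipartiteGraph (Fin 3) (Fin 3))

/-- A graph is 2-connected if it has at least 3 vertices and deleting any single vertex
leaves a connected graph. -/
def SimpleGraph.TwoConnected {V : Type*} (G : SimpleGraph V) : Prop :=
  3 ≤ Nat.card V ∧ ∀ v : V, ((⊤ : G.Subgraph).deleteVerts {v}).coe.Connected

/-- An orientation of a simple graph `G`, encoded by its skew adjacency matrix entries:
`sign u v = 1` if the edge `uv` is directed from `u` to `v`, `-1` if it is directed
from `v` to `u`, and `0` if `uv` is not an edge. -/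
structure SimpleGraph.Orientation {V : Type*} (G : SimpleGraph V) where
  sign : V → V → ℤ
  skew : ∀ u v, sign u v = - sign v u
  adj : ∀ u v, G.Adj u v → sign u v = 1 ∨ sign u v = -1
  not_adj : ∀ u v, ¬ G.Adj u v → sign u v = 0

/-- A closed walk is oddly oriented if an odd number of its edges are directed in
agreement with the traversal direction of the walk. -/
def SimpleGraph.Orientation.OddlyOriented {V : Type*} {G : SimpleGraph V}
    (o : G.Orientation) {v : V} (c : G.Walk v v) : Prop :=
  Odd ((c.darts.filter (fun d => o.sign d.toProd.1 d.toProd.2 = 1)).length)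

/-- A Pfaffian orientation: every nice cycle (a cycle `C` such that `G - V(C)` has a
perfect matching) is oddly oriented. -/
def SimpleGraph.Orientation.IsPfaffian {V : Type*} {G : SimpleGraph V}
    (o : G.Orientation) : Prop :=
  ∀ (v : V) (c : G.Walk v v), c.IsCycle →
    (∃ M : G.Subgraph, M.IsMatching ∧ M.verts = {w | w ∉ c.support}) →
    o.OddlyOriented c

/-!
Call a set of vertices nonseparable if it stays connected after the deletion of any one vertex. The
vertex set of a cycle is nonseparable, and in a 2-connected graph a nonseparable set can be enlarged
by ears until it is the whole vertex set, remaining nonseparable throughout. By Whitney's theorem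
the two ends of an ear are joined by two internally disjoint paths inside the set. In a bipartite
graph the lengths of these paths and of the ear have the same parity; were they even, the three
paths would form an even subdivision of `K₂,₃`, the branch vertices of degree two being the
neighbours of one end. So every ear has odd length and its interior is perfectly matched along the
ear. These matchings together cover everything off the cycle, so every cycle is nice.
-/

namespace EarDecomposition

open SimpleGraph

variable {V : Type*} {G : SimpleGraph V} {S : Set V} {u v : V}

section Nonseparable

/-- `S` is nonseparable in `G`: the subgraph induced on `S` stays connected after the deletion of
at most one vertex. -/
def NonseparableOn (G : SimpleGraph V) (S : Set V) : Prop :=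
  ∀ T : Set V, T.Subsingleton → (G.induce (S \ T)).Preconnected

theorem preconnected_induce_iff_forall_exists_walk :
    (G.induce S).Preconnected ↔
      ∀ x ∈ S, ∀ y ∈ S, ∃ p : G.Walk x y, ∀ z ∈ p.support, z ∈ S := by
  constructor
  · intro hS x hx y hy
    obtain ⟨p⟩ := hS ⟨x, hx⟩ ⟨y, hy⟩
    refine ⟨p.map (Embedding.induce S).toHom, fun z hz ↦ ?_⟩
    obtain ⟨z', -, rfl⟩ := List.mem_map.1 (Walk.support_map _ p ▸ hz)
    exact z'.2
  · rintro hS ⟨x, hx⟩ ⟨y, hy⟩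
    obtain ⟨p, hp⟩ := hS x hx y hy
    exact ⟨p.induce S hp⟩

theorem nonseparableOn_iff_forall_exists_walk :
    NonseparableOn G S ↔ ∀ T : Set V, T.Subsingleton → ∀ x ∈ S \ T, ∀ y ∈ S \ T,
      ∃ p : G.Walk x y, ∀ z ∈ p.support, z ∈ S \ T :=
  forall₂_congr fun _ _ ↦ preconnected_induce_iff_forall_exists_walk

theorem NonseparableOn.iUnion {ι : Type*} {S : ι → Set V} (hdir : Directed (· ⊆ ·) S)
    (hS : ∀ i, NonseparableOn G (S i)) : NonseparableOn G (⋃ i, S i) := by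
  refine nonseparableOn_iff_forall_exists_walk.2 fun T hT x hx y hy ↦ ?_
  obtain ⟨i, hi⟩ := Set.mem_iUnion.1 hx.1
  obtain ⟨j, hj⟩ := Set.mem_iUnion.1 hy.1
  obtain ⟨k, hik, hjk⟩ := hdir i j
  obtain ⟨p, hp⟩ := nonseparableOn_iff_forall_exists_walk.1 (hS k) T hT
    x ⟨hik hi, hx.2⟩ y ⟨hjk hj, hy.2⟩
  exact ⟨p, fun z hz ↦ ⟨Set.mem_iUnion_of_mem k (hp z hz).1, (hp z hz).2⟩⟩

theorem disjoint_or_disjoint_of_subsingleton {A B T : Set V} (hT : T.Subsingleton)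
    (hAB : Disjoint (A ∩ B) T) : Disjoint A T ∨ Disjoint B T := by
  obtain rfl | ⟨t, rfl⟩ := hT.eq_empty_or_singleton
  · simp
  · simpa [imp_iff_not_or] using hAB

/-- Two walks with the same ends are internally disjoint: they meet only in these ends. -/
def InternallyDisjoint (p q : G.Walk u v) : Prop :=
  ∀ z ∈ p.support, z ∈ q.support → z = u ∨ z = v

theorem InternallyDisjoint.symm {p q : G.Walk u v} (h : InternallyDisjoint p q) :
    InternallyDisjoint q p :=
  fun z hq hp ↦ h z hp hq

theorem internallyDisjoint_reverse_of_isCycle_append {p : G.Walk u v} {q : G.Walk v u}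
    (hc : (p.append q).IsCycle) : InternallyDisjoint p q.reverse := by
  intro z hp hq
  have hnodup := hc.support_nodup
  rw [Walk.tail_support_append, List.nodup_append'] at hnodup
  rw [Walk.support_reverse, List.mem_reverse, Walk.mem_support_iff] at hq
  rw [Walk.mem_support_iff] at hp
  grind [List.disjoint_left]

theorem nonseparableOn_support_of_isCycle {c : G.Walk v v} (hc : c.IsCycle) :
    NonseparableOn G {z | z ∈ c.support} := by
  classical
  refine nonseparableOn_iff_forall_exists_walk.2 fun T hT x hx y hy ↦ ?_
  have hcx := hc.rotate hx.1
  have hyx : y ∈ (c.rotate x hx.1).support := (c.mem_support_rotate_iff x hx.1).2 hy.1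
  obtain ⟨p, q, hpq⟩ := Walk.mem_support_iff_exists_append.1 hyx
  have hsupport {z : V} : z ∈ c.support ↔ z ∈ p.support ∨ z ∈ q.reverse.support := by
    rw [← c.mem_support_rotate_iff x hx.1, hpq, Walk.mem_support_append_iff,
      Walk.support_reverse, List.mem_reverse]
  have hdisj := internallyDisjoint_reverse_of_isCycle_append (hpq ▸ hcx)
  have havoid : Disjoint ({z | z ∈ p.support} ∩ {z | z ∈ q.reverse.support}) T := by
    refine Set.disjoint_left.2 fun z hz ↦ ?_
    obtain rfl | rfl := hdisj z hz.1 hz.2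
    exacts [hx.2, hy.2]
  obtain h | h := disjoint_or_disjoint_of_subsingleton hT havoid
  · exact ⟨p, fun z hz ↦ ⟨hsupport.2 (.inl hz), Set.disjoint_left.1 h hz⟩⟩
  · exact ⟨q.reverse, fun z hz ↦ ⟨hsupport.2 (.inr hz), Set.disjoint_left.1 h hz⟩⟩

end Nonseparable

section Whitney

theorem exists_isPath_to_set {D : Set V} (p : G.Walk u v) (hv : v ∈ D) :
    ∃ r ∈ D, ∃ R : G.Walk u r, R.IsPath ∧ R.support ⊆ p.support ∧
      ∀ z ∈ R.support, z ∈ D → z = r := by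
  classical
  obtain ⟨r, hr, hrp, hfirst⟩ := p.exists_mem_support_forall_mem_support_imp_eq
    {z ∈ p.support.toFinset | z ∈ D} ⟨v, by simp [hv]⟩
  have htake := p.support_takeUntil_subset_support hrp
  have hbypass := (p.takeUntil r hrp).support_bypass_subset_support
  refine ⟨r, (Finset.mem_filter.1 hr).2, (p.takeUntil r hrp).bypass, Walk.bypass_isPath _,
    List.Subset.trans hbypass htake, fun z hz hzD ↦ hfirst z ?_ (hbypass hz)⟩
  simpa [hzD] using htake (hbypass hz)

/-- The vertices `u` and `v` are joined by two internally disjoint paths inside `S`; the two paths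
may coincide if they consist of the single edge `uv`. -/
def DoublyLinkedIn (G : SimpleGraph V) (S : Set V) (u v : V) : Prop :=
  ∃ p q : G.Walk u v, p.IsPath ∧ q.IsPath ∧ InternallyDisjoint p q ∧
    (∀ z ∈ p.support, z ∈ S) ∧ ∀ z ∈ q.support, z ∈ S

theorem InternallyDisjoint.doublyLinkedIn {p q : G.Walk u v} (h : InternallyDisjoint p q)
    (hp : ∀ z ∈ p.support, z ∈ S) (hq : ∀ z ∈ q.support, z ∈ S) : DoublyLinkedIn G S u v := by
  classical
  have hp' := p.support_bypass_subset_support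
  have hq' := q.support_bypass_subset_support
  exact ⟨p.bypass, q.bypass, p.bypass_isPath, q.bypass_isPath,
    fun z hz hz' ↦ h z (hp' hz) (hq' hz'), fun z hz ↦ hp z (hp' hz), fun z hz ↦ hq z (hq' hz)⟩

theorem doublyLinkedIn_of_adj (huv : G.Adj u v) (hu : u ∈ S) (hv : v ∈ S) :
    DoublyLinkedIn G S u v :=
  InternallyDisjoint.doublyLinkedIn (p := huv.toWalk) (q := huv.toWalk)
    (by simp [InternallyDisjoint]) (by simp [hu, hv]) (by simp [hu, hv])

theorem internallyDisjoint_append_concat [DecidableEq V] {w r : V} {p q : G.Walk u w}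
    (hp : p.IsPath) (hpq : InternallyDisjoint p q) (hwv : G.Adj w v) (hr : r ∈ p.support)
    {R : G.Walk r v} (hRw : w ∉ R.support) (hRp : ∀ z ∈ R.support, z ∈ q.support → z = r) :
    InternallyDisjoint ((p.takeUntil r hr).append R) (q.concat hwv) := by
  have hwr : w ≠ r := fun h ↦ hRw (h ▸ R.start_mem_support)
  have hwp : w ∉ (p.takeUntil r hr).support := Walk.endpoint_notMem_support_takeUntil hp hr hwr
  intro z hz hzq
  rw [Walk.mem_support_append_iff] at hz
  rw [Walk.support_concat, List.mem_append, List.mem_singleton] at hzq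
  obtain hzq | rfl := hzq
  · have hzp : z ∈ p.support :=
      hz.elim (p.support_takeUntil_subset_support hr ·) (fun hzR ↦ hRp z hzR hzq ▸ hr)
    refine .inl ((hpq z hzp hzq).resolve_right ?_)
    rintro rfl
    exact hz.elim hwp hRw
  · exact .inr rfl

/- A walk from `v` avoiding `w` first meets the two paths at some `r`, say on `p`. Then `p` up to
`r` continued by this walk, and `q` continued by the edge `wv`, are internally disjoint. -/
theorem DoublyLinkedIn.of_adj {w : V} (hS : NonseparableOn G S) (hwv : G.Adj w v) (huw : u ≠ w)
    (hu : u ∈ S) (hv : v ∈ S) (h : DoublyLinkedIn G S u w) : DoublyLinkedIn G S u v := by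
  classical
  obtain ⟨p, q, hp, hq, hpq, hpS, hqS⟩ := h
  obtain ⟨W, hW⟩ := nonseparableOn_iff_forall_exists_walk.1 hS {w} Set.subsingleton_singleton
    v ⟨hv, hwv.ne'⟩ u ⟨hu, huw⟩
  obtain ⟨r, hr, R, -, hRW, hRfirst⟩ :=
    exists_isPath_to_set (D := {z | z ∈ p.support ∨ z ∈ q.support}) W (by simp)
  have hRS : ∀ z ∈ R.reverse.support, z ∈ S := fun z hz ↦ (hW z (hRW (by simpa using hz))).1
  have hRw : w ∉ R.reverse.support := fun h ↦ (hW w (hRW (by simpa using h))).2 rfl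
  have hdetour (p q : G.Walk u w) (hp : p.IsPath) (hpq : InternallyDisjoint p q)
      (hpS : ∀ z ∈ p.support, z ∈ S) (hqS : ∀ z ∈ q.support, z ∈ S) (hr : r ∈ p.support)
      (hRq : ∀ z ∈ R.support, z ∈ q.support → z = r) : DoublyLinkedIn G S u v := by
    refine (internallyDisjoint_append_concat hp hpq hwv hr hRw (by simpa using hRq)).doublyLinkedIn
      (fun z hz ↦ ?_) (fun z hz ↦ ?_)
    · obtain hz | hz := (Walk.mem_support_append_iff _ _).1 hz
      exacts [hpS z (p.support_takeUntil_subset_support hr hz), hRS z hz]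
    · obtain hz | rfl : z ∈ q.support ∨ z = v := by simpa [Walk.support_concat] using hz
      exacts [hqS z hz, hv]
  obtain hr | hr := hr
  · exact hdetour p q hp hpq hpS hqS hr fun z hz h ↦ hRfirst z hz (.inr h)
  · exact hdetour q p hq hpq.symm hqS hpS hr fun z hz h ↦ hRfirst z hz (.inl h)

theorem NonseparableOn.doublyLinkedIn (hS : NonseparableOn G S) (hu : u ∈ S) (hv : v ∈ S)
    (huv : u ≠ v) : DoublyLinkedIn G S u v := by
  obtain ⟨W, hW⟩ := nonseparableOn_iff_forall_exists_walk.1 hS ∅ Set.subsingleton_empty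
    v ⟨hv, Set.notMem_empty v⟩ u ⟨hu, Set.notMem_empty u⟩
  induction W with
  | nil => exact absurd rfl huv
  | @cons v w u hvw W ih =>
    have hW' : ∀ z ∈ W.support, z ∈ S \ ∅ := fun z hz ↦ hW z (by simp [hz])
    have hw : w ∈ S := (hW' w W.start_mem_support).1
    obtain rfl | huw := eq_or_ne u w
    · exact doublyLinkedIn_of_adj hvw.symm hu hv
    · exact (ih hu hw huw hW').of_adj hS hvw.symm huw hu hv

end Whitney

section Theta

theorem hasSubdivision_completeBipartiteGraph {α β : Type*} {plen : ℕ → Prop} (f : α ⊕ β → V)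
    (hf : Function.Injective f) (Q : ∀ i j, G.Walk (f (.inl i)) (f (.inr j)))
    (hpath : ∀ i j, (Q i j).IsPath) (hlen : ∀ i j, plen (Q i j).length)
    (hbranch : ∀ i j w, f w ∈ (Q i j).support → w = .inl i ∨ w = .inr j)
    (hmeet : ∀ i j i' j', (i, j) ≠ (i', j') → ∀ z ∈ (Q i j).support, z ∈ (Q i' j').support →
      z ∈ Set.range f) :
    G.HasSubdivision (completeBipartiteGraph α β) plen := by
  have hends (i j i' j') (hne : (i, j) ≠ (i', j')) (z) (hz : z ∈ (Q i j).support)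
      (hz' : z ∈ (Q i' j').support) :
      (z = f (.inl i) ∨ z = f (.inr j)) ∧ (z = f (.inl i') ∨ z = f (.inr j')) := by
    obtain ⟨w, rfl⟩ := hmeet i j i' j' hne z hz hz'
    exact ⟨(hbranch i j w hz).imp (congrArg f) (congrArg f),
      (hbranch i' j' w hz').imp (congrArg f) (congrArg f)⟩
  refine ⟨f, hf, fun a b hab ↦ match a, b, hab with
    | .inl i, .inr j, _ => Q i j
    | .inr j, .inl i, _ => (Q i j).reverse
    | .inl _, .inl _, hab => absurd hab (by simp)
    | .inr _, .inr _, hab => absurd hab (by simp), ?_, ?_, ?_, ?_⟩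
  · rintro (i | i) (j | j) hab
    · simp at hab
    · exact hpath i j
    · exact (hpath j i).reverse
    · simp at hab
  · rintro (i | i) (j | j) hab
    · simp at hab
    · exact hlen i j
    · exact (Q j i).length_reverse ▸ hlen j i
    · simp at hab
  · rintro (i | i) (j | j) hab w hw
    · simp at hab
    · exact hbranch i j w hw
    · exact (hbranch j i w (by simpa using hw)).symm
    · simp at hab
  · rintro (i | i) (j | j) (i' | i') (j' | j') hab hab' hne z hz hz'
    all_goals first
      | simp at hab; done
      | simp at hab'; done
      | skip
    all_goals
      simp only [Walk.support_reverse, List.mem_reverse] at hz hz'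
      grind

theorem ne_of_isPath_of_odd_length {p : G.Walk u v} (hp : p.IsPath) (hodd : Odd p.length) :
    u ≠ v := by
  rintro rfl
  simp [Walk.length_eq_zero_iff.2 (Walk.isPath_iff_nil.1 hp)] at hodd

theorem hasSubdivision_completeBipartiteGraph_fin_two {ι : Type*} {plen : ℕ → Prop} {b : ι → V}
    (huv : u ≠ v) (hub : ∀ i, G.Adj u (b i)) (hbv : ∀ i, b i ≠ v) (q : ∀ i, G.Walk (b i) v)
    (hq : ∀ i, (q i).IsPath) (huq : ∀ i, u ∉ (q i).support)
    (hb : ∀ i j, b i ∈ (q j).support → i = j)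
    (hmeet : ∀ i j, i ≠ j → ∀ z ∈ (q i).support, z ∈ (q j).support → z = v)
    (hone : plen 1) (hlen : ∀ i, plen (q i).length) :
    G.HasSubdivision (completeBipartiteGraph (Fin 2) ι) plen := by
  refine hasSubdivision_completeBipartiteGraph (Sum.elim ![u, v] b) ?_
    (fun k i ↦ match k with
      | 0 => (hub i).toWalk
      | 1 => (q i).reverse) ?_ ?_ ?_ ?_
  · refine Function.Injective.sumElim (by simp [Function.Injective, huv, huv.symm])
      (fun i j h ↦ hb i j (by simp [h])) ?_
    simp [Fin.forall_fin_two, (hub _).ne, (hbv _).symm]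
  · simp [Fin.forall_fin_two, (hub _).ne, hq]
  · simp [Fin.forall_fin_two, hone, hlen]
  · rintro k i (k' | j) hw
    · fin_cases k <;> fin_cases k' <;> simp_all [eq_comm (a := v)]
    · obtain rfl : j = i := hb j i (by fin_cases k <;> simp_all [(hub _).ne'])
      exact .inr rfl
  · intro k i k' i' hne z hz hz'
    have hedge (i) (hz : z = u ∨ z = b i) : z ∈ Set.range (Sum.elim ![u, v] b) :=
      hz.elim (fun h ↦ ⟨.inl 0, h.symm⟩) fun h ↦ ⟨.inr i, h.symm⟩
    fin_cases k
    · exact hedge i (by simpa using hz)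
    fin_cases k'
    · exact hedge i' (by simpa using hz')
    · have hzv := hmeet i i' (by simpa using hne) z (by simpa using hz) (by simpa using hz')
      exact ⟨.inl 1, hzv.symm⟩

theorem containsEvenSubdivision_of_internallyDisjoint {ι : Type*} {P : ι → G.Walk u v}
    (huv : u ≠ v) (hP : ∀ i, (P i).IsPath) (heven : ∀ i, Even (P i).length)
    (hdisj : Pairwise fun i j ↦ InternallyDisjoint (P i) (P j)) :
    G.ContainsEvenSubdivision (completeBipartiteGraph (Fin 2) ι) := by
  -- The branch vertices besides `u` and `v` are the second vertices of the paths.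
  choose b hub q hPq using fun i ↦ (P i).exists_eq_cons_of_ne huv
  obtain rfl : P = fun i ↦ .cons (hub i) (q i) := funext hPq
  have hq (i) : (q i).IsPath ∧ u ∉ (q i).support := (Walk.cons_isPath_iff _ _).1 (hP i)
  have hodd (i) : Odd (q i).length := by simpa [Nat.even_add_one] using heven i
  have hbv (i) : b i ≠ v := ne_of_isPath_of_odd_length (hq i).1 (hodd i)
  refine hasSubdivision_completeBipartiteGraph_fin_two huv hub hbv q (fun i ↦ (hq i).1)
    (fun i ↦ (hq i).2) (fun i j h ↦ ?_) (fun i j hij z hi hj ↦ ?_) odd_one hodd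
  · by_contra hij
    exact (hdisj hij (b i) (by simp) (by simp [h])).elim (hub i).ne' (hbv i)
  · exact (hdisj hij z (by simp [hi]) (by simp [hj])).resolve_left fun h ↦ (hq i).2 (h ▸ hi)

end Theta

section Ear

/-- A path `e` is an ear of `S` if it joins two distinct vertices of `S` and is otherwise disjoint
from `S`; a single edge inside `S` counts as an ear. -/
structure IsEar (S : Set V) (e : G.Walk u v) : Prop where
  isPath : e.IsPath
  start_mem : u ∈ S
  end_mem : v ∈ S
  ne : u ≠ v
  eq_or_eq : ∀ z ∈ e.support, z ∈ S → z = u ∨ z = v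

theorem exists_walk_to_end_avoiding {e : G.Walk u v} (he : e.IsPath) {T : Set V}
    (hT : T.Subsingleton) {x : V} (hx : x ∈ e.support) (hxT : x ∉ T) :
    ∃ w, (w = u ∨ w = v) ∧ ∃ p : G.Walk x w, p.support ⊆ e.support ∧ ∀ z ∈ p.support, z ∉ T := by
  obtain ⟨p, q, rfl⟩ := Walk.mem_support_iff_exists_append.1 hx
  have hmeet : Disjoint ({z | z ∈ p.support} ∩ {z | z ∈ q.support}) T := by
    refine Set.disjoint_left.2 fun z hz hzT ↦ ?_
    have hzx : z = x := by
      have hnodup := he.support_nodup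
      rw [Walk.support_append, List.nodup_append'] at hnodup
      exact ((Walk.mem_support_iff q).1 hz.2).resolve_right (hnodup.2.2 hz.1)
    exact hxT (hzx ▸ hzT)
  obtain h | h := disjoint_or_disjoint_of_subsingleton hT hmeet
  · exact ⟨u, .inl rfl, p.reverse, by simp, by simpa using Set.disjoint_left.1 h⟩
  · exact ⟨v, .inr rfl, q, by simp, by simpa using Set.disjoint_left.1 h⟩

theorem NonseparableOn.union_support (hS : NonseparableOn G S) {e : G.Walk u v} (he : e.IsPath)
    (hu : u ∈ S) (hv : v ∈ S) : NonseparableOn G (S ∪ {z | z ∈ e.support}) := by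
  refine nonseparableOn_iff_forall_exists_walk.2 fun T hT ↦ ?_
  have hretract : ∀ x ∈ (S ∪ {z | z ∈ e.support}) \ T, ∃ w ∈ S \ T, ∃ p : G.Walk x w,
      ∀ z ∈ p.support, z ∈ (S ∪ {z | z ∈ e.support}) \ T := by
    rintro x ⟨hxS | hxe, hxT⟩
    · exact ⟨x, ⟨hxS, hxT⟩, .nil, by simp [hxS, hxT]⟩
    · obtain ⟨w, hw, p, hpe, hpT⟩ := exists_walk_to_end_avoiding he hT hxe hxT
      exact ⟨w, ⟨by rcases hw with rfl | rfl <;> assumption, hpT w p.end_mem_support⟩, p,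
        fun z hz ↦ ⟨.inr (hpe hz), hpT z hz⟩⟩
  intro x hx y hy
  obtain ⟨a, ha, p, hp⟩ := hretract x hx
  obtain ⟨b, hb, q, hq⟩ := hretract y hy
  obtain ⟨r, hr⟩ := nonseparableOn_iff_forall_exists_walk.1 hS T hT a ha b hb
  refine ⟨(p.append r).append q.reverse, fun z hz ↦ ?_⟩
  simp only [Walk.mem_support_append_iff, Walk.support_reverse, List.mem_reverse] at hz
  obtain (hz | hz) | hz := hz
  exacts [hp z hz, ⟨.inl (hr z hz).1, (hr z hz).2⟩, hq z hz]

theorem IsEar.odd_length {e : G.Walk u v} (he : IsEar S e) (hbip : G.Colorable 2)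
    (hG : ¬ G.ContainsEvenSubdivision (completeBipartiteGraph (Fin 2) (Fin 3)))
    (hS : NonseparableOn G S) : Odd e.length := by
  by_contra hodd
  obtain ⟨p, q, hp, hq, hpq, hpS, hqS⟩ := hS.doublyLinkedIn he.start_mem he.end_mem he.ne
  have heven (r : G.Walk u v) : Even r.length := by
    have hloop := two_colorable_iff_forall_loop_even.1 hbip u (r.append e.reverse)
    rw [Walk.length_append, Walk.length_reverse, Nat.even_add] at hloop
    exact hloop.2 (Nat.not_odd_iff_even.1 hodd)
  have hpe : InternallyDisjoint p e := fun z hzp hze ↦ he.eq_or_eq z hze (hpS z hzp)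
  have hqe : InternallyDisjoint q e := fun z hzq hze ↦ he.eq_or_eq z hze (hqS z hzq)
  refine hG (containsEvenSubdivision_of_internallyDisjoint (P := ![p, q, e]) he.ne ?_ ?_ ?_)
  · simp [Fin.forall_fin_succ, hp, hq, he.isPath]
  · simp [heven]
  · simp [Pairwise, Fin.forall_fin_succ, hpq, hpq.symm, hpe, hpe.symm, hqe, hqe.symm]

theorem exists_isEar (hG : ∀ v, (G.induce {v}ᶜ).Preconnected) (hS : S.Nontrivial) {x : V}
    (hx : x ∉ S) : ∃ u v, ∃ e : G.Walk u v, IsEar S e ∧ ∃ w ∈ e.support, w ∉ S := by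
  obtain ⟨s, hs⟩ := hS.nonempty
  obtain ⟨t, ht, hts⟩ := hS.exists_ne s
  have hreach := fun v ↦ preconnected_induce_iff_forall_exists_walk.1 (hG v)
  obtain ⟨p, -⟩ := hreach t s (by simp [hts.symm]) x (by rintro rfl; exact hx ht)
  obtain ⟨d, -, hu, hw⟩ := p.exists_boundary_dart S hs hx
  obtain ⟨y, hy, hyu⟩ := hS.exists_ne d.fst
  obtain ⟨W, hW⟩ := hreach d.fst d.snd d.adj.ne' y hyu
  obtain ⟨v, hv, R, hR, hRW, hRfirst⟩ := exists_isPath_to_set W hy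
  have huR : d.fst ∉ R.support := fun h ↦ hW _ (hRW h) rfl
  refine ⟨d.fst, v, .cons d.adj R, ⟨hR.cons huR, hu, hv, ?_, ?_⟩, d.snd, by simp, hw⟩
  · rintro rfl
    exact huR R.end_mem_support
  · simpa using fun z hz hzS ↦ .inr (hRfirst z hz hzS)

end Ear

section Matching

theorem exists_isMatching_verts_eq_support_diff : ∀ {u v : V} {p : G.Walk u v}, p.IsPath →
    Odd p.length → ∃ M : G.Subgraph, M.IsMatching ∧ M.verts = {z | z ∈ p.support} \ {u, v}
  | _, _, .nil, _, hodd => by simp at hodd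
  | u, v, .cons _ .nil, _, _ =>
    ⟨⊥, fun _ h ↦ h.elim, by ext; simp +contextual [or_iff_not_imp_left]⟩
  | u, v, .cons (v := b) hub (.cons (v := w) hbw q), hp, hodd => by
    obtain ⟨⟨hq, hbq⟩, hup⟩ : (q.IsPath ∧ b ∉ q.support) ∧ u ∉ b :: q.support := by
      simpa using hp
    have hqodd : Odd q.length := by simpa [parity_simps] using hodd
    have hwv := ne_of_isPath_of_odd_length hq hqodd
    obtain ⟨M, hM, hMverts⟩ := exists_isMatching_verts_eq_support_diff hq hqodd
    refine ⟨M ⊔ G.subgraphOfAdj hbw, hM.sup (.subgraphOfAdj hbw) ?_, ?_⟩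
    · rw [hM.support_eq_verts, (Subgraph.IsMatching.subgraphOfAdj hbw).support_eq_verts, hMverts]
      simp [hbq]
    · ext z
      have hw := q.start_mem_support
      have hv := q.end_mem_support
      simp only [Subgraph.verts_sup, hMverts, subgraphOfAdj_verts, Walk.support_cons, Set.mem_union,
        Set.mem_sdiff, Set.mem_insert_iff, Set.mem_singleton_iff, Set.mem_ofPred_eq, List.mem_cons]
      grind

theorem isMatching_iSup_of_directed {ι : Type*} {M : ι → G.Subgraph} (hdir : Directed (· ≤ ·) M)
    (hM : ∀ i, (M i).IsMatching) : (⨆ i, M i).IsMatching := by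
  intro x hx
  obtain ⟨i, hi⟩ := Set.mem_iUnion.1 (Subgraph.verts_iSup ▸ hx)
  obtain ⟨y, hxy, -⟩ := hM i hi
  refine ⟨y, Subgraph.iSup_adj.2 ⟨i, hxy⟩, fun z hz ↦ ?_⟩
  obtain ⟨j, hj⟩ := Subgraph.iSup_adj.1 hz
  obtain ⟨k, hik, hjk⟩ := hdir i j
  exact (hM k).eq_of_adj_left (hjk.2 hj) (hik.2 hxy)

/-- A matching `M` is a nonseparable extension of `C` if it covers no vertex of `C` and its vertices
together with `C` form a nonseparable set. Zorn's lemma is applied to these matchings. -/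
structure IsNonseparableExtension (C : Set V) (M : G.Subgraph) : Prop where
  isMatching : M.IsMatching
  disjoint : Disjoint C M.verts
  nonseparableOn : NonseparableOn G (C ∪ M.verts)

theorem IsNonseparableExtension.exists_gt {C : Set V} {M : G.Subgraph}
    (hM : IsNonseparableExtension C M) (hC : C.Nontrivial)
    (hG : ∀ v, (G.induce {v}ᶜ).Preconnected) (hbip : G.Colorable 2)
    (hK : ¬ G.ContainsEvenSubdivision (completeBipartiteGraph (Fin 2) (Fin 3))) {x : V}
    (hx : x ∉ C ∪ M.verts) : ∃ M' : G.Subgraph, IsNonseparableExtension C M' ∧ M < M' := by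
  obtain ⟨u, v, e, he, w, hwe, hw⟩ := exists_isEar hG (hC.mono Set.subset_union_left) hx
  obtain ⟨N, hN, hNverts⟩ := exists_isMatching_verts_eq_support_diff he.isPath
    (he.odd_length hbip hK hM.nonseparableOn)
  have hdisj : Disjoint (C ∪ M.verts) N.verts := by
    rw [hNverts]
    exact Set.disjoint_left.2 fun z hz hzN ↦ hzN.2 (he.eq_or_eq z hzN.1 hz)
  have hunion : C ∪ (M ⊔ N).verts = C ∪ M.verts ∪ {z | z ∈ e.support} := by
    rw [Subgraph.verts_sup, hNverts, ← Set.union_assoc]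
    ext z
    have hu := he.start_mem
    have hv := he.end_mem
    grind
  refine ⟨M ⊔ N, ⟨hM.isMatching.sup hN ?_, ?_, ?_⟩, ?_⟩
  · rw [hM.isMatching.support_eq_verts, hN.support_eq_verts]
    exact hdisj.mono_left Set.subset_union_right
  · exact Set.disjoint_union_right.2 ⟨hM.disjoint, hdisj.mono_left Set.subset_union_left⟩
  · rw [hunion]
    exact hM.nonseparableOn.union_support he.isPath he.start_mem he.end_mem
  · refine le_sup_left.lt_of_ne fun h ↦ hw ?_
    have : w ∈ C ∪ (M ⊔ N).verts := hunion ▸ .inr hwe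
    rwa [← h] at this

theorem IsNonseparableExtension.sSup_of_isChain {C : Set V} {c : Set G.Subgraph}
    (hc : IsChain (· ≤ ·) c) (hne : c.Nonempty) (h : ∀ M ∈ c, IsNonseparableExtension C M) :
    IsNonseparableExtension C (sSup c) := by
  have := hne.to_subtype
  have hdir : Directed (· ≤ ·) ((↑) : c → G.Subgraph) := hc.directed
  refine sSup_eq_iSup' c ▸ ⟨isMatching_iSup_of_directed hdir fun M ↦ (h M M.2).isMatching, ?_, ?_⟩
  · rw [Subgraph.verts_iSup, Set.disjoint_iUnion_right]
    exact fun M ↦ (h M M.2).disjoint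
  · rw [Subgraph.verts_iSup, Set.union_iUnion]
    refine .iUnion (fun M N ↦ ?_) fun M ↦ (h M M.2).nonseparableOn
    obtain ⟨K, hMK, hNK⟩ := hdir M N
    exact ⟨K, Set.union_subset_union_right C hMK.1, Set.union_subset_union_right C hNK.1⟩

theorem exists_isMatching_verts_eq_compl {C : Set V} (hC : NonseparableOn G C)
    (hC2 : C.Nontrivial) (hG : ∀ v, (G.induce {v}ᶜ).Preconnected) (hbip : G.Colorable 2)
    (hK : ¬ G.ContainsEvenSubdivision (completeBipartiteGraph (Fin 2) (Fin 3))) :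
    ∃ M : G.Subgraph, M.IsMatching ∧ M.verts = Cᶜ := by
  have hbot : IsNonseparableExtension C (⊥ : G.Subgraph) :=
    ⟨fun _ h ↦ h.elim, by simp, by simpa using hC⟩
  obtain ⟨M, -, hM⟩ := zorn_le_nonempty₀ {M : G.Subgraph | IsNonseparableExtension C M}
    (fun c hcs hc M hM ↦ ⟨sSup c, .sSup_of_isChain hc ⟨M, hM⟩ hcs, fun _ ↦ le_sSup⟩) ⊥ hbot
  refine ⟨M, hM.prop.isMatching, (IsCompl.compl_eq ⟨hM.prop.disjoint, codisjoint_iff.2 ?_⟩).symm⟩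
  refine Set.eq_univ_iff_forall.2 ?_
  by_contra! ⟨x, hx⟩
  obtain ⟨M', hM', hlt⟩ := hM.prop.exists_gt hC2 hG hbip hK hx
  exact hM.not_gt hM' hlt

end Matching

theorem preconnected_induce_compl_singleton_of_twoConnected (hG : G.TwoConnected) (v : V) :
    (G.induce {v}ᶜ).Preconnected := by
  rw [induce_eq_coe_induce_top, Set.compl_eq_univ_sdiff]
  exact (hG.2 v).preconnected

end EarDecomposition

theorem stmt_17_general {V : Type*} (G : SimpleGraph V)
    (hconn : ∀ v : V, (G.induce {v}ᶜ).Preconnected) (hbip : G.Colorable 2)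
    (h : ¬ G.ContainsEvenSubdivision (completeBipartiteGraph (Fin 2) (Fin 3)))
    (o : G.Orientation) (hpf : o.IsPfaffian) :
    ∀ (v : V) (c : G.Walk v v), c.IsCycle → o.OddlyOriented c := by
  intro v c hc
  have hnontrivial : {z | z ∈ c.support}.Nontrivial :=
    ⟨v, c.start_mem_support, c.snd, c.getVert_mem_support 1, (c.adj_snd hc.not_nil).ne⟩
  exact hpf v c hc <| EarDecomposition.exists_isMatching_verts_eq_compl
    (EarDecomposition.nonseparableOn_support_of_isCycle hc) hnontrivial hconn hbip h

theorem stmt_17 {V : Type*} [Fintype V] (G : SimpleGraph V)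
    (h2 : G.TwoConnected) (hbip : G.Colorable 2)
    (h : ¬ G.ContainsEvenSubdivision (completeBipartiteGraph (Fin 2) (Fin 3)))
    (o : G.Orientation) (hpf : o.IsPfaffian) :
    ∀ (v : V) (c : G.Walk v v), c.IsCycle → o.OddlyOriented c := by
  exact stmt_17_general G (EarDecomposition.preconnected_induce_compl_singleton_of_twoConnected h2)
    hbip h o hpf
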